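/- (Shield lemma) Let μ be a probability measure on {0,1}^{ℤ²} such that μ-almost surely there exists exactly one infinite 0cluster and μ-almost surely there exists at most one infinite 1*cluster. Then for every finite set Δ ⊂ ℤ², μ-almost surely there exists a mixed circuit around Δ. -/

import Mathlib

/-!
Only the uniqueness of the infinite clusters enters: every configuration with at most one infinite
`0`cluster and at most one infinite `1*`cluster has a mixed circuit around each square
`Λ = {-n, …, n}²`.

The winding number of a closed lattice path outside `Λ` is the sum over its steps of an
integer-valued cochain `cut`, which counts signed crossings of a ray from the origin
(`encloses_of_pathSum`). Suppose that no mixed circuit winds around `Λ`. The plan is to construct a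
potential of `cut` on a large square ring around `Λ`; there is none, as the ring itself winds once
(`cut_not_exact_ring`).

* Monochromatic cycles (nearest-neighbour for spin `0`, `*` for spin `1`) are mixed circuits, so
  outside `Λ` the restriction of `cut` to monochromatic steps has a potential `g`
  (`exists_isPotential`).
* The edges joining a `0` to a `1` are arranged in interfaces, the orbits of the permutation
  `nextPerm`, which moves one step along the boundary between the two spins. A function of the edges
  that is constant along interfaces defines a cochain that vanishes on monochromatic steps and is
  exact on the whole plane (`exists_crossing_potential`). The `defect` of `g`, i.e. `cut` minus the
  increment of `g` across an edge, is constant along interfaces as long as they stay away from `Λ`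
  (`defect_next`).
* At most one interface is infinite: two of them would border the same infinite `0`cluster and the
  same infinite `1*`cluster, which contradicts the exactness of the cochain of one of them
  (`infInterface_unique`).
* After a change of `g` by a constant on one monochromatic component, the defects at the two ends
  of the infinite interface agree. If no such change is available, then the two ends are joined
  outside `Λ` by a `0`path and by a `1*`path, and the resulting mixed circuit forces the agreement
  (`exists_balanced_potential`, `exists_uniform_potential`).

So far from `Λ` the defect coincides with a function constant along interfaces, and adding a
potential `f` of the corresponding cochain to `g` gives the forbidden potential of `cut` on a large
ring (`exists_mixed_circuit`).
-/

open MeasureTheory ProbabilityTheory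
open scoped ENNReal

namespace Percolation

/-- Sites of the square lattice. -/
abbrev Site : Type := ℤ × ℤ

/-- Configurations: spins `0`/`1` encoded as `false`/`true`. -/
abbrev Config : Type := Site → Bool

/-- Nearest-neighbour adjacency: Euclidean distance `1`. -/
def adj (x y : Site) : Prop :=
  (x.1 - y.1) ^ 2 + (x.2 - y.2) ^ 2 = 1

/-- `*`adjacency: Euclidean distance `1` or `√2`. -/
def adjStar (x y : Site) : Prop :=
  x ≠ y ∧ |x.1 - y.1| ≤ 1 ∧ |x.2 - y.2| ≤ 1

/-- `x` and `y` are joined inside `G` by a path whose consecutive sites satisfy `R`. -/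
def JoinedIn (R : Site → Site → Prop) (G : Set Site) (x y : Site) : Prop :=
  ∃ P : List Site, P.Chain' R ∧ (∀ z ∈ P, z ∈ G) ∧ P.head? = some x ∧ P.getLast? = some y

/-- `S` is a `0`cluster of `σ`: a maximal `adj`-connected subset of `σ⁻¹(0)`. -/
def IsCluster0 (σ : Config) (S : Set Site) : Prop :=
  S.Nonempty ∧ (∀ z ∈ S, σ z = false) ∧
    (∀ x ∈ S, ∀ y ∈ S, JoinedIn adj S x y) ∧
    (∀ x ∈ S, ∀ y : Site, adj x y → σ y = false → y ∈ S)

/-- `S` is a `1*`cluster of `σ`: a maximal `adjStar`-connected subset of `σ⁻¹(1)`. -/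
def IsCluster1 (σ : Config) (S : Set Site) : Prop :=
  S.Nonempty ∧ (∀ z ∈ S, σ z = true) ∧
    (∀ x ∈ S, ∀ y ∈ S, JoinedIn adjStar S x y) ∧
    (∀ x ∈ S, ∀ y : Site, adjStar x y → σ y = true → y ∈ S)

/-- `x` belongs to an infinite `1*`cluster of `σ`. -/
def InInfinite1 (σ : Config) (x : Site) : Prop :=
  ∃ S : Set Site, IsCluster1 σ S ∧ S.Infinite ∧ x ∈ S

/-- There is exactly one infinite `0`cluster. -/
def UniqueInfinite0 (σ : Config) : Prop :=
  ∃! S : Set Site, IsCluster0 σ S ∧ S.Infinite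

/-- There is exactly one infinite `1*`cluster. -/
def UniqueInfinite1 (σ : Config) : Prop :=
  ∃! S : Set Site, IsCluster1 σ S ∧ S.Infinite

/-- There is at most one infinite `1*`cluster. -/
def AtMostOneInfinite1 (σ : Config) : Prop :=
  ∀ S T : Set Site, IsCluster1 σ S → S.Infinite → IsCluster1 σ T → T.Infinite → S = T

/-- An infinite `1*`cluster exists. -/
def ExistsInfinite1 (σ : Config) : Prop := ∃ S : Set Site, IsCluster1 σ S ∧ S.Infinite

/-- An infinite `0`cluster exists. -/
def ExistsInfinite0 (σ : Config) : Prop := ∃ S : Set Site, IsCluster0 σ S ∧ S.Infinite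

/-- An increasing event. -/
def IncreasingEvent (A : Set Config) : Prop :=
  ∀ ⦃ξ η : Config⦄, ξ ∈ A → ξ ≤ η → η ∈ A

/-- Positive association: increasing events are positively correlated. -/
def PositivelyAssociated (μ : Measure Config) : Prop :=
  ∀ A B : Set Config, MeasurableSet A → MeasurableSet B →
    IncreasingEvent A → IncreasingEvent B → μ A * μ B ≤ μ (A ∩ B)

/-- The cylinder event "`η` on `Δ`". -/
def cylEvent (Δ : Finset Site) (η : Site → Bool) : Set Config :=
  {σ | ∀ z ∈ Δ, σ z = η z}

/-- The σ-algebra generated by the spins outside `Δ`. -/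
def outsideAlgebra (Δ : Finset Site) : MeasurableSpace Config :=
  MeasurableSpace.comap (fun σ (z : {z : Site // z ∉ Δ}) => σ z.1) inferInstance

/-- The bounded energy condition: `μ(η on Δ | ξ off Δ) ≥ c_{|Δ|}` for a.e. `ξ`, expressed
via integrated conditional probabilities against events of the outside σ-algebra. -/
def BoundedEnergy (μ : Measure Config) : Prop :=
  ∀ n : ℕ, ∃ c : ℝ≥0∞, 0 < c ∧
    ∀ Δ : Finset Site, Δ.card = n → ∀ η : Site → Bool,
      ∀ B : Set Config, MeasurableSet[outsideAlgebra Δ] B →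
        c * μ B ≤ μ (cylEvent Δ η ∩ B)

/-- The finite energy condition: `μ(η on Δ | ξ off Δ) > 0` for a.e. `ξ`, expressed
via integrated conditional probabilities against events of the outside σ-algebra. -/
def FiniteEnergy (μ : Measure Config) : Prop :=
  ∀ (Δ : Finset Site) (η : Site → Bool) (B : Set Config),
    MeasurableSet[outsideAlgebra Δ] B → 0 < μ B → 0 < μ (cylEvent Δ η ∩ B)

/-- The tail σ-algebra. -/
def tailAlgebra : MeasurableSpace Config :=
  ⨅ Δ : Finset Site, outsideAlgebra Δ

/-- Translation of configurations by `v`. -/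
def shift (v : Site) (σ : Config) : Config := fun z => σ (z + v)

/-- A site viewed as a complex number. -/
noncomputable def toC (z : Site) : ℂ := (z.1 : ℂ) + (z.2 : ℂ) * Complex.I

/-- Winding number around the origin of the polygonal curve through the sites of `P`. -/
noncomputable def winding (P : List Site) : ℝ :=
  (1 / (2 * Real.pi)) *
    ((P.zip P.tail).map fun p => Complex.arg (toC p.2 / toC p.1)).sum

/-- Winding number of `P` around the site `w`. -/
noncomputable def windingAround (P : List Site) (w : Site) : ℝ :=
  winding (P.map fun z => z - w)

/-- The site `w` lies in the interior of the circuit `C`, i.e. is enclosed by `C`. -/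
def circuitEncloses (C : List Site) (w : Site) : Prop :=
  w ∉ C ∧ windingAround (C ++ C.take 1) w ≠ 0

/-- A circuit: a path whose starting site is adjacent to its ending site. -/
def IsCircuit (C : List Site) : Prop :=
  C.Chain' adj ∧ ∃ h : C ≠ [], adj (C.getLast h) (C.head h)

/-- A `*`circuit: a `*`path whose starting site is `*`adjacent to its ending site. -/
def IsStarCircuit (C : List Site) : Prop :=
  C.Chain' adjStar ∧ ∃ h : C ≠ [], adjStar (C.getLast h) (C.head h)

/-- A (finite) `1*`path with respect to `σ`. -/
def Is1StarPath (σ : Config) (P : List Site) : Prop :=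
  P ≠ [] ∧ P.Chain' adjStar ∧ ∀ z ∈ P, σ z = true

/-- A (finite) `0`path with respect to `σ`. -/
def Is0Path (σ : Config) (P : List Site) : Prop :=
  P ≠ [] ∧ P.Chain' adj ∧ ∀ z ∈ P, σ z = false

/-- A `1*`circuit with respect to `σ`. -/
def Is1StarCircuit (σ : Config) (C : List Site) : Prop :=
  IsStarCircuit C ∧ ∀ z ∈ C, σ z = true

/-- A `0`circuit with respect to `σ`. -/
def Is0Circuit (σ : Config) (C : List Site) : Prop :=
  IsCircuit C ∧ ∀ z ∈ C, σ z = false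

/-- `C` is a circuit around `Δ`: every site of `Δ` is enclosed by `C`. -/
def CircuitAround (C : List Site) (Δ : Set Site) : Prop :=
  ∀ z ∈ Δ, circuitEncloses C z

/-- A mixed circuit with respect to `σ`: a self-avoiding `*`circuit consisting of a
self-avoiding `1*`path followed by a self-avoiding `0`path (either part may be empty). -/
def IsMixedCircuit (σ : Config) (C : List Site) : Prop :=
  ∃ P Q : List Site, C = P ++ Q ∧ C.Nodup ∧
    P.Chain' adjStar ∧ Q.Chain' adj ∧
    (∀ z ∈ P, σ z = true) ∧ (∀ z ∈ Q, σ z = false) ∧ IsStarCircuit C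

/-- `z` lies in the exterior of the circuit `C`. -/
def InExterior (C : List Site) (z : Site) : Prop :=
  z ∉ C ∧ ¬ circuitEncloses C z

/-- An infinite self-avoiding `1*`path with respect to `σ`. -/
def IsInfSA1StarPath (σ : Config) (f : ℕ → Site) : Prop :=
  Function.Injective f ∧ (∀ i, adjStar (f i) (f (i + 1))) ∧ ∀ i, σ (f i) = true

/-- An infinite self-avoiding `0`path with respect to `σ`. -/
def IsInfSA0Path (σ : Config) (f : ℕ → Site) : Prop :=
  Function.Injective f ∧ (∀ i, adj (f i) (f (i + 1))) ∧ ∀ i, σ (f i) = false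

/-- There exist `n` pairwise disjoint infinite self-avoiding `1*`paths. -/
def HasNDisjoint1 (σ : Config) (n : ℕ) : Prop :=
  ∃ f : Fin n → ℕ → Site, (∀ i, IsInfSA1StarPath σ (f i)) ∧
    ∀ i j, i ≠ j → Disjoint (Set.range (f i)) (Set.range (f j))

/-- A two-sided infinite self-avoiding `1*`path with respect to `σ`. -/
def IsTwoSidedInf1 (σ : Config) (f : ℤ → Site) : Prop :=
  Function.Injective f ∧ (∀ i : ℤ, adjStar (f i) (f (i + 1))) ∧ ∀ i : ℤ, σ (f i) = true

/-- A `1*`path of `σ` from `x` to `y` avoiding `Δ`. -/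
def starPathBetweenAvoiding (σ : Config) (Δ : Set Site) (x y : Site) (P : List Site) : Prop :=
  Is1StarPath σ P ∧ P.head? = some x ∧ P.getLast? = some y ∧ ∀ z ∈ P, z ∉ Δ

/-- `x` is on the left side of `Γ`. -/
def OnLeftSide (x : Site) (Γ : Set Site) : Prop :=
  ∃ d : ℕ, 0 < d ∧ (∀ z ∈ Γ, |z.1| ≤ (d : ℤ) ∧ |z.2| ≤ (d : ℤ)) ∧ x.1 ≤ -(d : ℤ)

/-- `x` is on the right side of `Γ`. -/
def OnRightSide (x : Site) (Γ : Set Site) : Prop :=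
  ∃ d : ℕ, 0 < d ∧ (∀ z ∈ Γ, |z.1| ≤ (d : ℤ) ∧ |z.2| ≤ (d : ℤ)) ∧ (d : ℤ) ≤ x.1

/-- The square `{-n, …, n}²`. -/
def square (n : ℕ) : Set Site := {z : Site | |z.1| ≤ (n : ℤ) ∧ |z.2| ≤ (n : ℤ)}

/-- The `*`boundary `∂*B` of a set of sites. -/
def starBoundary (B : Set Site) : Set Site :=
  {x | x ∉ B ∧ ∃ y ∈ B, adjStar x y}

/-- The union of all infinite `1*`clusters of `σ`. -/
def InfinitePart1 (σ : Config) : Set Site := {z | InInfinite1 σ z}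

/-- The filled infinite `1*`cluster `S₁*`: the infinite `1*`cluster together with all
finite `0`clusters `*`encircled by it. -/
def Fill (σ : Config) : Set Site :=
  InfinitePart1 σ ∪
    {z | ∃ F : Set Site, IsCluster0 σ F ∧ F.Finite ∧ z ∈ F ∧
      ∃ C : List Site, IsStarCircuit C ∧ (∀ w ∈ C, w ∈ InfinitePart1 σ) ∧
        ∀ w ∈ F, circuitEncloses C w}

/-- The indicator of the filled infinite `1*`cluster, as a point of `{0,1}^{ℤ²}`. -/
noncomputable def fillInd (σ : Config) : Site → Bool :=
  fun z => @decide (z ∈ Fill σ) (Classical.propDecidable _)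

/-- Exactly one infinite `0`cluster and exactly one infinite `1*`cluster coexist. -/
def CoexistUnique (σ : Config) : Prop := UniqueInfinite0 σ ∧ UniqueInfinite1 σ

/-! ### Winding numbers by counting crossings of a ray -/

/-- The signed number of times the step from `p` to `q` crosses the cut: the ray going left
from the origin, placed between the rows `0` and `-1`. Downward crossings count `1`; the value is
meaningful only for `near` sites. -/
def cut (p q : Site) : ℤ :=
  if p.2 = 0 ∧ p.1 < 0 ∧ q.2 = -1 then 1
  else if q.2 = 0 ∧ q.1 < 0 ∧ p.2 = -1 then -1 else 0

lemma cut_swap (p q : Site) : cut q p = -cut p q := by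
  unfold cut
  split_ifs <;> omega

/-- Equal or `*`adjacent. -/
def near (p q : Site) : Prop := |p.1 - q.1| ≤ 1 ∧ |p.2 - q.2| ≤ 1

lemma adj.star {p q : Site} (h : adj p q) : adjStar p q := by
  unfold adj at h
  refine ⟨?_, ?_, ?_⟩
  · rintro rfl; simp at h
  · rw [← sq_le_one_iff_abs_le_one]; nlinarith [sq_nonneg (p.2 - q.2)]
  · rw [← sq_le_one_iff_abs_le_one]; nlinarith [sq_nonneg (p.1 - q.1)]

lemma adjStar.near {p q : Site} (h : adjStar p q) : near p q := h.2

lemma adjStar.symm {p q : Site} (h : adjStar p q) : adjStar q p := by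
  obtain ⟨h1, h2, h3⟩ := h
  exact ⟨h1.symm, by rwa [abs_sub_comm], by rwa [abs_sub_comm]⟩

lemma adj.symm {p q : Site} (h : adj p q) : adj q p := by
  unfold adj at *; linarith [sq_nonneg (p.1 - q.1)]

/-- `cut` is closed away from the origin: its sum round every lattice triangle that avoids
the origin vanishes. -/
lemma cut_triangle {p q r : Site} (hp : p ≠ 0) (hq : q ≠ 0) (hr : r ≠ 0)
    (pq : near p q) (qr : near q r) (pr : near p r) :
    cut p q + cut q r = cut p r := by
  obtain ⟨p1, p2⟩ := p
  obtain ⟨q1, q2⟩ := q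
  obtain ⟨r1, r2⟩ := r
  simp only [near, abs_le, ne_eq, Prod.mk_eq_zero] at *
  unfold cut
  dsimp only
  split_ifs <;> omega

/-- The cochain `cut` with the ray starting at `w` instead of the origin. -/
def cutAt (w p q : Site) : ℤ := cut (p - w) (q - w)

/-- Outside a square containing `0` and `w`, the rays from `0` and from `w` give cohomologous
cochains; this function is the difference: it is `1` or `-1` left of the origin on the rows
between the two rays, and `0` elsewhere. -/
def cutShift (w z : Site) : ℤ :=
  if z.1 < 0 then
    if 0 ≤ z.2 ∧ z.2 < w.2 then 1 else if w.2 ≤ z.2 ∧ z.2 < 0 then -1 else 0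
  else 0

lemma cutAt_eq {n : ℕ} {w p q : Site} (hw : w ∈ square n) (hp : p ∉ square n)
    (hq : q ∉ square n) (h : near p q) :
    cutAt w p q = cut p q + (cutShift w q - cutShift w p) := by
  obtain ⟨p1, p2⟩ := p
  obtain ⟨q1, q2⟩ := q
  obtain ⟨w1, w2⟩ := w
  simp only [near, abs_le, square, Set.mem_ofPred_eq] at *
  unfold cutAt cut cutShift
  simp only [Prod.mk_sub_mk]
  split_ifs <;> omega

lemma toC_re (z : Site) : (toC z).re = z.1 := by simp [toC]
lemma toC_im (z : Site) : (toC z).im = z.2 := by simp [toC]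

lemma toC_ne {z : Site} (h : z ≠ 0) : toC z ≠ 0 := by
  intro h0
  apply h
  have h1 := toC_re z
  have h2 := toC_im z
  rw [h0] at h1 h2
  ext
  · simpa using h1.symm
  · simpa using h2.symm

/-- The principal angle subtended by a lattice step is the increment of the principal argument,
corrected by `2π` whenever the step crosses the branch cut of `arg`, which is the ray of `cut`. -/
lemma arg_step {p q : Site} (hp : p ≠ 0) (hq : q ≠ 0) (h : near p q) :
    Complex.arg (toC q / toC p)
      = Complex.arg (toC q) - Complex.arg (toC p) + 2 * Real.pi * (cut p q : ℝ) := by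
  have hP := toC_ne hp
  have hQ := toC_ne hq
  have key : (Complex.arg (toC q / toC p) : Real.Angle)
      = ((Complex.arg (toC q) - Complex.arg (toC p) + 2 * Real.pi * (cut p q : ℝ) : ℝ)
          : Real.Angle) := by
    rw [Complex.arg_div_coe_angle hQ hP, Real.Angle.coe_add, Real.Angle.coe_sub]
    have : ((2 * Real.pi * (cut p q : ℝ) : ℝ) : Real.Angle) = 0 := by
      rw [Real.Angle.coe_eq_zero_iff]
      exact ⟨cut p q, by simp [mul_comm]⟩
    rw [this, add_zero]
  -- The two sides agree modulo `2π`; both lie in `(-π, π]`, which is checked by position of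
  -- `p` and `q` relative to the horizontal axis.
  have hb : Complex.arg (toC q) - Complex.arg (toC p) + 2 * Real.pi * (cut p q : ℝ)
      ∈ Set.Ioc (-Real.pi) Real.pi := by
    have pi := Real.pi_pos
    have up : ∀ z : Site, 0 ≤ z.2 → 0 ≤ Complex.arg (toC z) := fun z hz => by
      rw [Complex.arg_nonneg_iff, toC_im]; exact_mod_cast hz
    have dn : ∀ z : Site, z.2 < 0 → Complex.arg (toC z) < 0 := fun z hz => by
      rw [Complex.arg_neg_iff, toC_im]; exact_mod_cast hz
    have le : ∀ z : Site, Complex.arg (toC z) ≤ Real.pi := fun z => Complex.arg_le_pi _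
    have gt : ∀ z : Site, -Real.pi < Complex.arg (toC z) := fun z => Complex.neg_pi_lt_arg _
    have eqpi : ∀ z : Site, z.2 = 0 → z.1 < 0 → Complex.arg (toC z) = Real.pi :=
      fun z h2 h1 => by
        rw [Complex.arg_eq_pi_iff, toC_im, toC_re]
        exact ⟨by exact_mod_cast h1, by exact_mod_cast h2⟩
    have eq0 : ∀ z : Site, z.2 = 0 → 0 < z.1 → Complex.arg (toC z) = 0 :=
      fun z h2 h1 => by
        rw [Complex.arg_eq_zero_iff, toC_im, toC_re]
        exact ⟨by exact_mod_cast h1.le, by exact_mod_cast h2⟩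
    have nz : ∀ z : Site, z ≠ 0 → z.2 = 0 → z.1 < 0 ∨ 0 < z.1 := fun z hz h2 => by
      rcases lt_trichotomy z.1 0 with h | h | h
      · exact Or.inl h
      · exact absurd (Prod.ext h h2) hz
      · exact Or.inr h
    have hh := h
    simp only [near, abs_le] at hh
    rcases lt_or_ge p.2 0 with a | a <;> rcases lt_or_ge q.2 0 with b | b
    · have hc : cut p q = 0 := by unfold cut; split_ifs <;> omega
      rw [hc]
      have := dn p a; have := dn q b; have := gt p; have := gt q
      constructor <;> push_cast <;> linarith
    · have q0 : q.2 = 0 := by omega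
      have p0 : p.2 = -1 := by omega
      have := dn p a; have := gt p
      rcases nz q hq q0 with c | c
      · have hc : cut p q = -1 := by unfold cut; split_ifs <;> omega
        rw [hc, eqpi q q0 c]
        constructor <;> push_cast <;> linarith
      · have hc : cut p q = 0 := by unfold cut; split_ifs <;> omega
        rw [hc, eq0 q q0 c]
        constructor <;> push_cast <;> linarith
    · have q0 : q.2 = -1 := by omega
      have p0 : p.2 = 0 := by omega
      have := dn q b; have := gt q
      rcases nz p hp p0 with c | c
      · have hc : cut p q = 1 := by unfold cut; split_ifs <;> omega
        rw [hc, eqpi p p0 c]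
        constructor <;> push_cast <;> linarith
      · have hc : cut p q = 0 := by unfold cut; split_ifs <;> omega
        rw [hc, eq0 p p0 c]
        constructor <;> push_cast <;> linarith
    · have hc : cut p q = 0 := by unfold cut; split_ifs <;> omega
      rw [hc]
      have := up p a; have := up q b; have := le p; have := le q
      refine ⟨?_, by push_cast; linarith⟩
      by_contra hcon
      have e1 : Complex.arg (toC p) = Real.pi := by push_cast at hcon; linarith
      have e2 : Complex.arg (toC q) = 0 := by push_cast at hcon; linarith
      rw [Complex.arg_eq_pi_iff, toC_im, toC_re] at e1
      rw [Complex.arg_eq_zero_iff, toC_im, toC_re] at e2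
      have f1 : p.1 < 0 := by exact_mod_cast e1.1
      have f2 : 0 ≤ q.1 := by exact_mod_cast e2.1
      have f3 : q.2 = 0 := by exact_mod_cast e2.2
      rcases nz q hq f3 with c | c <;> omega
  have h1 := (Real.Angle.toReal_coe_eq_self_iff_mem_Ioc).2 hb
  have h2 := (Real.Angle.toReal_coe_eq_self_iff_mem_Ioc).2 (Complex.arg_mem_Ioc (toC q / toC p))
  rw [← h1, ← h2, key]

/-- The sum of the cochain `a` over the steps of the list `L`. -/
def pathSum {M : Type*} [AddCommGroup M] (a : Site → Site → M) (L : List Site) : M :=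
  ((L.zip L.tail).map fun p => a p.1 p.2).sum

section pathSum
variable {M : Type*} [AddCommGroup M] (a : Site → Site → M)

@[simp] lemma pathSum_nil : pathSum a [] = 0 := rfl
@[simp] lemma pathSum_singleton (x : Site) : pathSum a [x] = 0 := rfl
@[simp] lemma pathSum_cons_cons (x y : Site) (L : List Site) :
    pathSum a (x :: y :: L) = a x y + pathSum a (y :: L) := by
  simp [pathSum]

lemma pathSum_append (L K : List Site) (hL : L ≠ []) (hK : K ≠ []) :
    pathSum a (L ++ K) = pathSum a L + a (L.getLast hL) (K.head hK) + pathSum a K := by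
  induction L with
  | nil => exact absurd rfl hL
  | cons x L ih =>
    cases L with
    | nil => obtain ⟨y, K, rfl⟩ := List.exists_cons_of_ne_nil hK; simp
    | cons y L =>
      have := ih (by simp)
      simp only [List.cons_append, pathSum_cons_cons] at this ⊢
      rw [this]
      simp [add_assoc]

lemma pathSum_congr_coboundary {b : Site → Site → M} {R : Site → Site → Prop} (f : Site → M)
    (H : ∀ x y, R x y → a x y = b x y + (f y - f x)) (L : List Site) (hL : L.IsChain R)
    (hne : L ≠ []) :
    pathSum a L = pathSum b L + (f (L.getLast hne) - f (L.head hne)) := by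
  induction L with
  | nil => exact absurd rfl hne
  | cons x L ih =>
    cases L with
    | nil => simp
    | cons y L =>
      rw [List.isChain_cons_cons] at hL
      have := ih hL.2 (by simp)
      simp only [pathSum_cons_cons, List.head_cons, List.getLast_cons_cons] at this ⊢
      rw [this, H x y hL.1]
      abel
end pathSum

/-- The cyclic list `C` traversed once, ending where it started. -/
def loop (C : List Site) : List Site := C ++ C.take 1

lemma loop_chain {R : Site → Site → Prop} {C : List Site} (h : C.IsChain R) (hne : C ≠ [])
    (hc : R (C.getLast hne) (C.head hne)) : (loop C).IsChain R := by
  obtain ⟨x, L, rfl⟩ := List.exists_cons_of_ne_nil hne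
  unfold loop
  rw [List.isChain_append]
  refine ⟨h, by simp, ?_⟩
  intro u hu v hv
  rw [List.getLast?_eq_getLast_of_ne_nil hne] at hu
  simp at hu hv
  subst hu hv
  exact hc

/-- Cohomologous cochains have the same sum round a closed path. -/
lemma loop_sum_coboundary {M : Type*} [AddCommGroup M] {a b : Site → Site → M}
    {R : Site → Site → Prop} (f : Site → M)
    (H : ∀ x y, R x y → a x y = b x y + (f y - f x)) {C : List Site}
    (h : C.IsChain R) (hne : C ≠ [])
    (hc : R (C.getLast hne) (C.head hne)) : pathSum a (loop C) = pathSum b (loop C) := by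
  have hne' : loop C ≠ [] := by simp [loop, hne]
  rw [pathSum_congr_coboundary a f H _ (loop_chain h hne hc) hne']
  obtain ⟨x, L, rfl⟩ := List.exists_cons_of_ne_nil hne
  simp [loop]

lemma pathSum_loop {M : Type*} [AddCommGroup M] (a : Site → Site → M) (C : List Site)
    (hne : C ≠ []) :
    pathSum a (loop C) = pathSum a C + a (C.getLast hne) (C.head hne) := by
  obtain ⟨x, L, rfl⟩ := List.exists_cons_of_ne_nil hne
  rw [loop, pathSum_append _ _ _ hne (by simp)]
  simp

lemma windingAround_eq (L : List Site) (w : Site) :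
    windingAround L w = (1 / (2 * Real.pi)) *
      pathSum (fun p q => Complex.arg (toC (q - w) / toC (p - w))) L := by
  unfold windingAround winding pathSum
  rw [← List.map_tail, List.zip_map, List.map_map]
  rfl

lemma pathSum_smul_cast (k : ℝ) (a : Site → Site → ℤ) (L : List Site) :
    pathSum (fun p q => k * (a p q : ℝ)) L = k * (pathSum a L : ℤ) := by
  induction L with
  | nil => simp
  | cons x L ih =>
    cases L with
    | nil => simp
    | cons y L => simp only [pathSum_cons_cons, ih]; push_cast; ring

/-- A closed `*`path outside a square centred at the origin along which `cut` has nonzero sum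
encloses every site of the square: the sum is its winding number about each of them. -/
lemma encloses_of_pathSum {n : ℕ} {C : List Site} (h : C.IsChain adjStar) (hne : C ≠ [])
    (hc : adjStar (C.getLast hne) (C.head hne)) (hav : ∀ z ∈ C, z ∉ square n)
    (hsum : pathSum cut (loop C) ≠ 0) {w : Site} (hw : w ∈ square n) :
    circuitEncloses C w := by
  refine ⟨fun hwC => hav w hwC hw, ?_⟩
  let R : Site → Site → Prop := fun p q => near p q ∧ p ∉ square n ∧ q ∉ square n
  have hR : C.IsChain R := by
    rw [List.isChain_iff_getElem] at h ⊢
    intro i hi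
    exact ⟨(h i hi).near, hav _ (List.getElem_mem _), hav _ (List.getElem_mem _)⟩
  have hRc : R (C.getLast hne) (C.head hne) :=
    ⟨hc.near, hav _ (List.getLast_mem _), hav _ (List.head_mem _)⟩
  have e1 : pathSum (cutAt w) (loop C) = pathSum cut (loop C) :=
    loop_sum_coboundary (cutShift w) (R := R)
      (fun p q hpq => cutAt_eq hw hpq.2.1 hpq.2.2 hpq.1) hR hne hRc
  have e2 : pathSum (fun p q => Complex.arg (toC (q - w) / toC (p - w))) (loop C)
      = pathSum (fun p q => (2 * Real.pi) * (cutAt w p q : ℝ)) (loop C) := by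
    refine loop_sum_coboundary (fun z => Complex.arg (toC (z - w))) (R := R) ?_ hR hne hRc
    intro p q hpq
    have hp : p - w ≠ 0 := fun h => hpq.2.1 (by rwa [sub_eq_zero.1 h])
    have hq : q - w ≠ 0 := fun h => hpq.2.2 (by rwa [sub_eq_zero.1 h])
    rw [arg_step hp hq (by simpa [near] using hpq.1)]
    simp only [cutAt]
    ring
  change windingAround (loop C) w ≠ 0
  rw [windingAround_eq, e2, pathSum_smul_cast, e1]
  have := Real.pi_pos
  have h3 : ((pathSum cut (loop C) : ℤ) : ℝ) ≠ 0 := by exact_mod_cast hsum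
  positivity

/-! ### Potentials on graphs -/

section potential
variable {H : SimpleGraph Site}

/-- The sum of the cochain `a` over the steps of a walk. -/
def walkSum (a : Site → Site → ℤ) {u v : Site} (p : H.Walk u v) : ℤ := pathSum a p.support

@[simp] lemma walkSum_nil (a : Site → Site → ℤ) (u : Site) :
    walkSum a (SimpleGraph.Walk.nil : H.Walk u u) = 0 := rfl

@[simp] lemma walkSum_cons (a : Site → Site → ℤ) {u v w : Site} (h : H.Adj u v)
    (p : H.Walk v w) : walkSum a (SimpleGraph.Walk.cons h p) = a u v + walkSum a p := by
  unfold walkSum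
  cases p <;> simp

lemma walkSum_append (a : Site → Site → ℤ) {u v w : Site} (p : H.Walk u v)
    (q : H.Walk v w) : walkSum a (p.append q) = walkSum a p + walkSum a q := by
  induction p with
  | nil => simp
  | cons h p ih => simp [ih, add_assoc]

/-- Erasing loops does not change the sum. -/
lemma walkSum_bypass (a : Site → Site → ℤ)
    (hcyc : ∀ (u v : Site) (p : H.Walk u v), p.IsPath → H.Adj v u → walkSum a p + a v u = 0)
    {u v : Site} (p : H.Walk u v) : walkSum a p.bypass = walkSum a p := by
  induction p with
  | nil => rfl
  | @cons x y z h p ih =>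
    rw [walkSum_cons, ← ih]
    simp only [SimpleGraph.Walk.bypass]
    split_ifs with hs
    · have h1 := hcyc y x (p.bypass.takeUntil x hs) ((p.bypass_isPath).takeUntil hs) h
      have h2 := walkSum_append a (p.bypass.takeUntil x hs) (p.bypass.dropUntil x hs)
      rw [SimpleGraph.Walk.take_spec] at h2
      linarith
    · rw [walkSum_cons]

/-- A cochain on a graph whose sum round every simple cycle (a path closed up by one edge)
vanishes is a coboundary. Antisymmetry need not be assumed: backtracking along an edge is one of
these cycles. -/
lemma exists_potential (a : Site → Site → ℤ)
    (hcyc : ∀ (u v : Site) (p : H.Walk u v), p.IsPath → H.Adj v u → walkSum a p + a v u = 0) :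
    ∃ g : Site → ℤ, ∀ x y, H.Adj x y → a x y = g y - g x := by
  have hclosed : ∀ (u : Site) (p : H.Walk u u), walkSum a p = 0 := by
    intro u p
    rw [← walkSum_bypass a hcyc p, SimpleGraph.Walk.isPath_iff_nil.1 p.bypass_isPath |>.eq_nil]
    rfl
  have hrev : ∀ (u v : Site) (p q : H.Walk u v), walkSum a p = walkSum a q := by
    intro u v p q
    have h1 := hclosed _ (p.append q.reverse)
    have h2 := hclosed _ (q.append q.reverse)
    rw [walkSum_append] at h1 h2
    linarith
  have hr : ∀ x : Site, H.Reachable (H.connectedComponentMk x).out x := fun x =>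
    SimpleGraph.ConnectedComponent.exact (Quot.out_eq _)
  refine ⟨fun x => walkSum a (hr x).some, fun x y h => ?_⟩
  have hxy : (H.connectedComponentMk x).out = (H.connectedComponentMk y).out := by
    rw [SimpleGraph.ConnectedComponent.sound h.reachable]
  have key : ∀ (r s : Site) (e : r = s) (p : H.Walk r x) (q : H.Walk s y),
      a x y = walkSum a q - walkSum a p := by
    rintro r s rfl p q
    have := hrev _ _ q (p.append (SimpleGraph.Walk.cons h .nil))
    rw [walkSum_append] at this
    simp at this
    linarith
  exact key _ _ hxy _ _

lemma walkSum_of_potential {a : Site → Site → ℤ} {g : Site → ℤ}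
    (hg : ∀ x y, H.Adj x y → a x y = g y - g x) {u v : Site} (p : H.Walk u v) :
    walkSum a p = g v - g u := by
  induction p with
  | nil => simp
  | cons h p ih => rw [walkSum_cons, ih, hg _ _ h]; ring

end potential

/-! ### Exactness on the plane -/

lemma exists_primitive (φ : ℤ → ℤ) : ∃ F : ℤ → ℤ, F 0 = 0 ∧ ∀ n, F (n + 1) - F n = φ n := by
  refine ⟨fun n => ∑ i ∈ Finset.Ico 0 n, φ i - ∑ i ∈ Finset.Ico n 0, φ i, by simp, fun n => ?_⟩
  rcases le_or_gt 0 n with h | h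
  · have h1 : Finset.Ico 0 (n + 1) = insert n (Finset.Ico 0 n) := by ext; simp; omega
    have h2 : Finset.Ico n 0 = ∅ := by simp [h]
    have h3 : Finset.Ico (n + 1) 0 = ∅ := Finset.Ico_eq_empty (by omega)
    simp [h1, h2, h3]
  · have h1 : Finset.Ico n 0 = insert n (Finset.Ico (n + 1) 0) := by ext; simp; omega
    have h2 : Finset.Ico 0 n = ∅ := Finset.Ico_eq_empty (by omega)
    have h3 : Finset.Ico 0 (n + 1) = ∅ := Finset.Ico_eq_empty (by omega)
    simp [h1, h2, h3]

lemma adj_cases {x y : Site} (h : adj x y) :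
    y = (x.1 + 1, x.2) ∨ y = (x.1, x.2 + 1) ∨ x = (y.1 + 1, y.2) ∨ x = (y.1, y.2 + 1) := by
  obtain ⟨x1, x2⟩ := x
  obtain ⟨y1, y2⟩ := y
  have h' := h.star
  simp only [adjStar, abs_le] at h'
  simp only [adj] at h
  simp only [Prod.mk.injEq]
  obtain ⟨-, ⟨a, b⟩, c, d⟩ := h'
  have e1 : x1 - y1 = -1 ∨ x1 - y1 = 0 ∨ x1 - y1 = 1 := by omega
  have e2 : x2 - y2 = -1 ∨ x2 - y2 = 0 ∨ x2 - y2 = 1 := by omega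
  rcases e1 with e1 | e1 | e1 <;> rcases e2 with e2 | e2 | e2 <;> rw [e1, e2] at h <;>
    omega

/-- On the square lattice an antisymmetric cochain with zero sum round every unit square is a
coboundary: integrate along the horizontal axis, then along the columns. -/
lemma exists_plane_potential (ψ : Site → Site → ℤ) (hsym : ∀ x y, ψ y x = -ψ x y)
    (hsq : ∀ a b : ℤ, ψ (a, b) (a + 1, b) + ψ (a + 1, b) (a + 1, b + 1)
      + ψ (a + 1, b + 1) (a, b + 1) + ψ (a, b + 1) (a, b) = 0) :
    ∃ f : Site → ℤ, ∀ x y, adj x y → ψ x y = f y - f x := by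
  obtain ⟨P, -, hP⟩ := exists_primitive (fun a => ψ (a, 0) (a + 1, 0))
  choose Q hQ0 hQ using fun a => exists_primitive (fun b => ψ (a, b) (a, b + 1))
  have hor : ∀ a b : ℤ, Q (a + 1) b - Q a b = ψ (a, b) (a + 1, b) - ψ (a, 0) (a + 1, 0) := by
    intro a b
    have step : ∀ b : ℤ, Q (a + 1) (b + 1) - Q a (b + 1) - (Q (a + 1) b - Q a b)
        = ψ (a, b + 1) (a + 1, b + 1) - ψ (a, b) (a + 1, b) := by
      intro b
      have h1 := hQ a b
      have h2 := hQ (a + 1) b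
      have h3 := hsq a b
      have h4 := hsym (a, b + 1) (a + 1, b + 1)
      have h5 := hsym (a, b) (a, b + 1)
      linarith
    induction b using Int.induction_on with
    | zero => simp [hQ0]
    | succ i ih => have := step i; linarith
    | pred i ih => have := step (-i - 1); rw [sub_add_cancel] at this; linarith
  have H : ∀ a b, ψ (a, b) (a + 1, b) = (P (a + 1) + Q (a + 1) b) - (P a + Q a b) := by
    intro a b
    have := hor a b
    have := hP a
    linarith
  have V : ∀ a b, ψ (a, b) (a, b + 1) = (P a + Q a (b + 1)) - (P a + Q a b) := by
    intro a b
    have := hQ a b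
    linarith
  refine ⟨fun z => P z.1 + Q z.1 z.2, fun x y h => ?_⟩
  obtain ⟨x1, x2⟩ := x
  obtain ⟨y1, y2⟩ := y
  rcases adj_cases h with h | h | h | h <;> simp only [Prod.mk.injEq] at h <;>
    obtain ⟨rfl, rfl⟩ := h
  · exact H _ _
  · exact V _ _
  · rw [hsym]; simp only [H]; ring
  · rw [hsym]; simp only [V]; ring

/-! ### Square rings around the origin -/

lemma adj_right (a b : ℤ) : adj (a, b) (a + 1, b) := by simp [adj]
lemma adj_up (a b : ℤ) : adj (a, b) (a, b + 1) := by simp [adj]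

/-- The boundary of the square `{-R, …, R}²`. -/
def squareRing (R : ℕ) : Set Site := {z | max |z.1| |z.2| = (R : ℤ)}

lemma const_on_interval (f : ℤ → ℤ) (a : ℤ) (n : ℕ)
    (h : ∀ i, a ≤ i → i < a + n → f (i + 1) = f i) : f (a + n) = f a := by
  induction n with
  | zero => simp
  | succ n ih =>
    have := h (a + n) (by omega) (by push_cast; omega)
    push_cast
    rw [← add_assoc, this]
    exact ih fun i hi hi' => h i hi (by push_cast; omega)

/-- `cut` is not a coboundary on a square ring, because the ring crosses the cut exactly once. -/
lemma cut_not_exact_ring (R : ℕ) (hR : 1 ≤ R) (φ : Site → ℤ)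
    (h : ∀ x y, adj x y → x ∈ squareRing R → y ∈ squareRing R → cut x y = φ y - φ x) : False := by
  have hmem : ∀ a b : ℤ, -R ≤ a → a ≤ R → -R ≤ b → b ≤ R →
      (a = R ∨ a = -R ∨ b = R ∨ b = -R) → ((a, b) : Site) ∈ squareRing R := by
    intro a b h1 h2 h3 h4 h5
    have ha : |a| ≤ R := abs_le.2 ⟨h1, h2⟩
    have hb : |b| ≤ R := abs_le.2 ⟨h3, h4⟩
    show max |a| |b| = (R : ℤ)
    apply le_antisymm (max_le ha hb)
    have : (R : ℤ) = |(R : ℤ)| := by simp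
    rcases h5 with rfl | rfl | rfl | rfl <;> simp
  have hz : ∀ x y : Site, adj x y → x ∈ squareRing R → y ∈ squareRing R → cut x y = 0 →
      φ y = φ x := by
    intro x y h1 h2 h3 h4
    have := h x y h1 h2 h3
    omega
  -- Following the ring from just above the cut to just below it, `φ` stays constant: `s1` to
  -- `s5` are the left side above the cut, top, right, bottom, and left side below the cut.
  have s1 : φ (-R, 0 + R) = φ (-R, 0) := by
    refine const_on_interval (fun i => φ (-R, i)) 0 R fun i h1 h2 => ?_
    refine hz _ _ (adj_up _ _) (hmem _ _ ?_ ?_ ?_ ?_ ?_) (hmem _ _ ?_ ?_ ?_ ?_ ?_) ?_ <;>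
      first | omega | (simp only [cut]; split_ifs <;> omega)
  have s2 : φ (-R + (2 * R : ℕ), R) = φ (-R, R) := by
    refine const_on_interval (fun i => φ (i, R)) (-R) (2 * R) fun i h1 h2 => ?_
    refine hz _ _ (adj_right _ _) (hmem _ _ ?_ ?_ ?_ ?_ ?_) (hmem _ _ ?_ ?_ ?_ ?_ ?_) ?_ <;>
      first | omega | (simp only [cut]; split_ifs <;> omega)
  have s3 : φ (R, -R + (2 * R : ℕ)) = φ (R, -R) := by
    refine const_on_interval (fun i => φ (R, i)) (-R) (2 * R) fun i h1 h2 => ?_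
    refine hz _ _ (adj_up _ _) (hmem _ _ ?_ ?_ ?_ ?_ ?_) (hmem _ _ ?_ ?_ ?_ ?_ ?_) ?_ <;>
      first | omega | (simp only [cut]; split_ifs <;> omega)
  have s4 : φ (-R + (2 * R : ℕ), -R) = φ (-R, -R) := by
    refine const_on_interval (fun i => φ (i, -R)) (-R) (2 * R) fun i h1 h2 => ?_
    refine hz _ _ (adj_right _ _) (hmem _ _ ?_ ?_ ?_ ?_ ?_) (hmem _ _ ?_ ?_ ?_ ?_ ?_) ?_ <;>
      first | omega | (simp only [cut]; split_ifs <;> omega)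
  have s5 : φ (-R, -R + (R - 1 : ℕ)) = φ (-R, -R) := by
    refine const_on_interval (fun i => φ (-R, i)) (-R) (R - 1) fun i h1 h2 => ?_
    refine hz _ _ (adj_up _ _) (hmem _ _ ?_ ?_ ?_ ?_ ?_) (hmem _ _ ?_ ?_ ?_ ?_ ?_) ?_ <;>
      first | omega | (simp only [cut]; split_ifs <;> omega)
  have e1 : (-R + (2 * R : ℕ) : ℤ) = R := by push_cast; ring
  have e2 : (-R + (R - 1 : ℕ) : ℤ) = -1 := by omega
  rw [e1] at s2 s3 s4
  rw [e2] at s5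
  rw [zero_add] at s1
  have last := h (-R, -1) (-R, 0) (adj_up _ (-1)) (hmem _ _ (by omega) (by omega) (by omega)
    (by omega) (by omega)) (hmem _ _ (by omega) (by omega) (by omega) (by omega) (by omega))
  have hc : cut ((-R : ℤ), -1) ((-R : ℤ), 0) = -1 := by
    rw [cut, if_neg (by norm_num), if_pos ⟨rfl, by dsimp only; omega, rfl⟩]
  rw [hc] at last
  omega

/-! ### Interfaces -/

/-- The four unit vectors. -/
def dirs : Finset Site := {(1, 0), (0, 1), (-1, 0), (0, -1)}

/-- Rotation by a quarter turn counterclockwise. -/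
def rot (u : Site) : Site := (-u.2, u.1)

lemma rot_rot (u : Site) : rot (rot u) = -u := by ext <;> simp [rot]
lemma rot_neg (u : Site) : rot (-u) = -rot u := by ext <;> simp [rot]
lemma rot_mem {u : Site} (h : u ∈ dirs) : rot u ∈ dirs := by
  revert u; decide
lemma neg_mem {u : Site} (h : u ∈ dirs) : -u ∈ dirs := by
  revert u; decide

lemma sub_mem_dirs {x y : Site} (h : adj x y) : y - x ∈ dirs := by
  obtain ⟨x1, x2⟩ := x
  obtain ⟨y1, y2⟩ := y
  rcases adj_cases h with h | h | h | h <;> simp only [Prod.mk.injEq] at h <;>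
    obtain ⟨rfl, rfl⟩ := h <;> simp [dirs]

/-- The pair `(x, u)` encodes an interface edge: the site `x` has spin `0` and its neighbour
`x + u` has spin `1`. -/
structure IsEdge (σ : Config) (e : Site × Site) : Prop where
  dir : e.2 ∈ dirs
  zero : σ e.1 = false
  one : σ (e.1 + e.2) = true

/-- Interface edges of `σ`: pairs of adjacent sites with spins `0` and `1`. -/
def IEdge (σ : Config) : Type := {e : Site × Site // IsEdge σ e}

/-- One step along the interface, with spin `0` on the left and spin `1` on the right. The
direction of travel is `rot u`. The two sites ahead decide the turn; in the ambiguous case, where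
the diagonals of the unit square are monochromatic, the two `1`s are kept on the same side, as
they are `*`adjacent. -/
def nextFun (σ : Config) (e : Site × Site) : Site × Site :=
  if σ (e.1 + rot e.2) = true then (e.1, rot e.2)
  else if σ (e.1 + e.2 + rot e.2) = true then (e.1 + rot e.2, e.2)
  else (e.1 + e.2 + rot e.2, -rot e.2)

/-- One step back along the interface, the inverse of `nextFun`. -/
def prevFun (σ : Config) (e : Site × Site) : Site × Site :=
  if σ (e.1 - rot e.2) = true then (e.1, -rot e.2)
  else if σ (e.1 + e.2 - rot e.2) = true then (e.1 - rot e.2, e.2)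
  else (e.1 + e.2 - rot e.2, rot e.2)

lemma IsEdge.next {σ : Config} {e : Site × Site} (h : IsEdge σ e) : IsEdge σ (nextFun σ e) := by
  obtain ⟨x, u⟩ := e
  obtain ⟨h1, h2, h3⟩ := h
  dsimp only at h1 h2 h3
  unfold nextFun
  split_ifs with a b
  · exact ⟨rot_mem h1, h2, a⟩
  · refine ⟨h1, by simpa using a, ?_⟩
    dsimp only at b ⊢
    rwa [add_right_comm]
  · exact ⟨neg_mem (rot_mem h1), by simpa using b, by simpa using h3⟩

lemma IsEdge.prev {σ : Config} {e : Site × Site} (h : IsEdge σ e) : IsEdge σ (prevFun σ e) := by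
  obtain ⟨x, u⟩ := e
  obtain ⟨h1, h2, h3⟩ := h
  dsimp only at h1 h2 h3
  unfold prevFun
  split_ifs with a b
  · exact ⟨neg_mem (rot_mem h1), h2, by simpa [sub_eq_add_neg] using a⟩
  · refine ⟨h1, by simpa using a, ?_⟩
    dsimp only at b ⊢
    rwa [sub_add_eq_add_sub]
  · exact ⟨rot_mem h1, by simpa using b, by simpa using h3⟩

lemma prev_next {σ : Config} {e : Site × Site} (h : IsEdge σ e) :
    prevFun σ (nextFun σ e) = e := by
  obtain ⟨x, u⟩ := e
  obtain ⟨h1, h2, h3⟩ := h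
  dsimp only at h1 h2 h3
  unfold nextFun
  split_ifs with a b <;> dsimp only at *
  · simp [prevFun, rot_rot, h3]
  · have : x + rot u + u - rot u = x + u := by abel
    simp [prevFun, h2, h3, this]
  · have e1 : x + u + rot u - u = x + rot u := by abel
    have e2 : x + u + rot u + -rot u - u = x := by abel
    simp only [prevFun, rot_neg, rot_rot, neg_neg, e1, e2, a, h2, Bool.false_eq_true, if_false]

lemma next_prev {σ : Config} {e : Site × Site} (h : IsEdge σ e) :
    nextFun σ (prevFun σ e) = e := by
  obtain ⟨x, u⟩ := e
  obtain ⟨h1, h2, h3⟩ := h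
  dsimp only at h1 h2 h3
  unfold prevFun
  split_ifs with a b <;> dsimp only at *
  · simp [nextFun, rot_neg, rot_rot, h3]
  · have : x - rot u + u + rot u = x + u := by abel
    simp [nextFun, h2, h3, this]
  · have e1 : x + u - rot u + -u = x - rot u := by abel
    have e2 : x + u - rot u + rot u + -u = x := by abel
    simp only [nextFun, rot_rot, neg_neg, e1, e2, a, h2, Bool.false_eq_true, if_false]

/-- The permutation of the interface edges moving one step along the interface. Its orbits are
the interfaces. -/
def nextPerm (σ : Config) : Equiv.Perm (IEdge σ) where
  toFun e := ⟨nextFun σ e.1, e.2.next⟩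
  invFun e := ⟨prevFun σ e.1, e.2.prev⟩
  left_inv e := Subtype.ext (prev_next e.2)
  right_inv e := Subtype.ext (next_prev e.2)

namespace IEdge
variable {σ : Config}

/-- The end of spin `0`. -/
def zero (e : IEdge σ) : Site := e.1.1

/-- The end of spin `1`. -/
def one (e : IEdge σ) : Site := e.1.1 + e.1.2

/-- The site ahead of `e.zero` in the direction of travel. -/
def zeroAhead (e : IEdge σ) : Site := e.1.1 + rot e.1.2

/-- The site ahead of `e.one` in the direction of travel. -/
def oneAhead (e : IEdge σ) : Site := e.1.1 + e.1.2 + rot e.1.2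

lemma zero_spin (e : IEdge σ) : σ e.zero = false := e.2.zero
lemma one_spin (e : IEdge σ) : σ e.one = true := e.2.one

lemma next_cases (e : IEdge σ) :
    (σ e.zeroAhead = true ∧ (nextPerm σ e).zero = e.zero ∧ (nextPerm σ e).one = e.zeroAhead) ∨
    (σ e.zeroAhead = false ∧ σ e.oneAhead = true ∧
      (nextPerm σ e).zero = e.zeroAhead ∧ (nextPerm σ e).one = e.oneAhead) ∨
    (σ e.zeroAhead = false ∧ σ e.oneAhead = false ∧
      (nextPerm σ e).zero = e.oneAhead ∧ (nextPerm σ e).one = e.one) := by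
  unfold zero one zeroAhead oneAhead
  have hn : (nextPerm σ e).1 = nextFun σ e.1 := rfl
  rw [hn, nextFun]
  split_ifs with a b
  · exact Or.inl ⟨a, rfl, rfl⟩
  · exact Or.inr (Or.inl ⟨by simpa using a, b, rfl, by simp [add_right_comm]⟩)
  · exact Or.inr (Or.inr ⟨by simpa using a, by simpa using b, rfl, by simp⟩)

lemma adj_of_dirs (e : IEdge σ) : adj e.zero e.one ∧ adj e.zero e.zeroAhead ∧
    adj e.one e.oneAhead ∧ adj e.zeroAhead e.oneAhead ∧ adjStar e.one e.zeroAhead ∧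
    adjStar e.zero e.oneAhead := by
  obtain ⟨⟨⟨a, b⟩, u⟩, h⟩ := e
  have hu := h.dir
  simp only [dirs, Finset.mem_insert, Finset.mem_singleton] at hu
  unfold zero one zeroAhead oneAhead
  rcases hu with rfl | rfl | rfl | rfl <;>
    simp [adj, adjStar, rot, Prod.ext_iff]

lemma ext_ends {e f : IEdge σ} (h0 : e.zero = f.zero) (h1 : e.one = f.one) : e = f := by
  unfold zero at h0
  unfold one at h1
  rw [h0] at h1
  exact Subtype.ext (Prod.ext h0 (add_left_cancel h1))

lemma exists_of_adj {x y : Site} (h : adj x y) (hx : σ x = false) (hy : σ y = true) :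
    ∃ e : IEdge σ, e.zero = x ∧ e.one = y :=
  ⟨⟨(x, y - x), ⟨sub_mem_dirs h, hx, by simpa using hy⟩⟩, rfl, by simp [one]⟩

lemma finite_of_zero {S : Set (IEdge σ)} {A : Set Site} (hA : A.Finite)
    (h : ∀ e ∈ S, e.zero ∈ A) : S.Finite := by
  refine Set.Finite.of_finite_image (f := Subtype.val) ?_ Subtype.val_injective.injOn
  refine (hA.prod dirs.finite_toSet).subset ?_
  rintro _ ⟨e, he, rfl⟩
  exact ⟨h e he, e.2.dir⟩

lemma finite_of_one {S : Set (IEdge σ)} {A : Set Site} (hA : A.Finite)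
    (h : ∀ e ∈ S, e.one ∈ A) : S.Finite := by
  refine finite_of_zero
    (A := (fun p : Site × Site => p.1 - p.2) '' (A ×ˢ (dirs : Set Site)))
    ((hA.prod dirs.finite_toSet).image _) ?_
  intro e he
  exact ⟨(e.one, e.1.2), ⟨h e he, e.2.dir⟩, by simp [one, zero]⟩

end IEdge

/-- The antisymmetric cochain that takes the value `h e` on the interface edge `e`, traversed from
spin `0` to spin `1`, and vanishes between equal spins. -/
noncomputable def crossing {σ : Config} (h : IEdge σ → ℤ) (x y : Site) : ℤ :=
  open Classical in
  if H : ∃ e : IEdge σ, e.zero = x ∧ e.one = y then h H.choose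
  else if H : ∃ e : IEdge σ, e.zero = y ∧ e.one = x then -h H.choose else 0

section crossing
variable {σ : Config} (h : IEdge σ → ℤ)

lemma crossing_edge (e : IEdge σ) : crossing h e.zero e.one = h e := by
  have H : ∃ f : IEdge σ, f.zero = e.zero ∧ f.one = e.one := ⟨e, rfl, rfl⟩
  rw [crossing, dif_pos H, IEdge.ext_ends H.choose_spec.1 H.choose_spec.2]

lemma crossing_same {x y : Site} (hxy : σ x = σ y) : crossing h x y = 0 := by
  rw [crossing, dif_neg, dif_neg]
  · rintro ⟨e, rfl, rfl⟩; simp [e.zero_spin, e.one_spin] at hxy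
  · rintro ⟨e, rfl, rfl⟩; simp [e.zero_spin, e.one_spin] at hxy

lemma crossing_edge' (e : IEdge σ) : crossing h e.one e.zero = -h e := by
  have H : ∃ f : IEdge σ, f.zero = e.zero ∧ f.one = e.one := ⟨e, rfl, rfl⟩
  rw [crossing, dif_neg, dif_pos H, IEdge.ext_ends H.choose_spec.1 H.choose_spec.2]
  rintro ⟨f, h1, h2⟩
  have := f.zero_spin
  rw [h1, e.one_spin] at this
  cases this

lemma crossing_swap (x y : Site) : crossing h y x = -crossing h x y := by
  by_cases H : ∃ e : IEdge σ, e.zero = x ∧ e.one = y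
  · obtain ⟨e, rfl, rfl⟩ := H
    rw [crossing_edge, crossing_edge']
  · by_cases H' : ∃ e : IEdge σ, e.zero = y ∧ e.one = x
    · obtain ⟨e, rfl, rfl⟩ := H'
      rw [crossing_edge, crossing_edge', neg_neg]
    · simp only [crossing, dif_neg H, dif_neg H', neg_zero]

/-- Invariance of `h` along interfaces, spelled out in terms of spins for the unit square on the
sites `x`, `x + u`, `x + rot u`, `x + u + rot u`. -/
lemma crossing_turn (hinv : ∀ e, h (nextPerm σ e) = h e) {x u : Site} (hu : u ∈ dirs)
    (hx : σ x = false) (hy : σ (x + u) = true) :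
    (σ (x + rot u) = true → crossing h x (x + u) = crossing h x (x + rot u)) ∧
    (σ (x + rot u) = false → σ (x + u + rot u) = true →
      crossing h x (x + u) = crossing h (x + rot u) (x + u + rot u)) ∧
    (σ (x + rot u) = false → σ (x + u + rot u) = false →
      crossing h x (x + u) = crossing h (x + u + rot u) (x + u)) := by
  let e : IEdge σ := ⟨(x, u), hu, hx, hy⟩
  have h1 : crossing h x (x + u) = h e := crossing_edge h e
  have h2 := crossing_edge h (nextPerm σ e)
  rw [h1, ← hinv e, ← h2]
  have hc := e.next_cases
  have ez : e.zero = x := rfl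
  have eo : e.one = x + u := rfl
  have ew : e.zeroAhead = x + rot u := rfl
  have ea : e.oneAhead = x + u + rot u := rfl
  rw [ez, eo, ew, ea] at hc
  rcases hc with ⟨a, b, c⟩ | ⟨a, d, b, c⟩ | ⟨a, d, b, c⟩ <;> rw [b, c] <;>
    refine ⟨?_, ?_, ?_⟩ <;> simp_all

/-- An interface that enters a unit square also leaves it, so the values of an invariant `h`
cancel round the square. -/
lemma crossing_square (hinv : ∀ e, h (nextPerm σ e) = h e) (a b : ℤ) :
    crossing h (a, b) (a + 1, b) + crossing h (a + 1, b) (a + 1, b + 1)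
      + crossing h (a + 1, b + 1) (a, b + 1) + crossing h (a, b + 1) (a, b) = 0 := by
  have t1 := crossing_turn h hinv (x := (a, b)) (u := (1, 0)) (by decide)
  have t2 := crossing_turn h hinv (x := (a + 1, b)) (u := (0, 1)) (by decide)
  have t3 := crossing_turn h hinv (x := (a + 1, b + 1)) (u := (-1, 0)) (by decide)
  have t4 := crossing_turn h hinv (x := (a, b + 1)) (u := (0, -1)) (by decide)
  simp only [rot, Prod.mk_add_mk, add_zero, neg_zero, add_neg_cancel_right, neg_neg] at t1 t2 t3 t4
  have s1 := crossing_swap h (a, b) (a + 1, b)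
  have s2 := crossing_swap h (a + 1, b) (a + 1, b + 1)
  have s3 := crossing_swap h (a + 1, b + 1) (a, b + 1)
  have s4 := crossing_swap h (a, b + 1) (a, b)
  have z1 := crossing_same h (x := (a, b)) (y := (a + 1, b))
  have z2 := crossing_same h (x := (a + 1, b)) (y := (a + 1, b + 1))
  have z3 := crossing_same h (x := (a + 1, b + 1)) (y := (a, b + 1))
  have z4 := crossing_same h (x := (a, b + 1)) (y := (a, b))
  generalize σ (a, b) = p1 at *
  generalize σ (a + 1, b) = p2 at *
  generalize σ (a + 1, b + 1) = p3 at *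
  generalize σ (a, b + 1) = p4 at *
  cases p1 <;> cases p2 <;> cases p3 <;> cases p4 <;> simp at t1 t2 t3 t4 z1 z2 z3 z4 <;> omega

lemma exists_crossing_potential (hinv : ∀ e, h (nextPerm σ e) = h e) :
    ∃ f : Site → ℤ, ∀ x y, adj x y → crossing h x y = f y - f x :=
  exists_plane_potential _ (crossing_swap h) (crossing_square h hinv)

end crossing

/-- The monochromatic graph outside `Λ`: sites of spin `0` are joined when adjacent, sites of
spin `1` when `*`adjacent. -/
def mono (σ : Config) (Λ : Set Site) : SimpleGraph Site where
  Adj x y := x ∉ Λ ∧ y ∉ Λ ∧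
    ((σ x = false ∧ σ y = false ∧ adj x y) ∨ (σ x = true ∧ σ y = true ∧ adjStar x y))
  symm := ⟨by
    rintro x y ⟨h1, h2, h | h⟩
    · exact ⟨h2, h1, Or.inl ⟨h.2.1, h.1, h.2.2.symm⟩⟩
    · exact ⟨h2, h1, Or.inr ⟨h.2.1, h.1, h.2.2.symm⟩⟩⟩
  loopless := ⟨by
    rintro x ⟨-, -, h | h⟩
    · exact h.2.2.star.1 rfl
    · exact h.2.2.1 rfl⟩

lemma mono_spin {σ : Config} {Λ : Set Site} {x y : Site} (h : (mono σ Λ).Reachable x y) :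
    σ x = σ y := by
  obtain ⟨p⟩ := h
  induction p with
  | nil => rfl
  | cons h p ih =>
    rw [← ih]
    rcases h.2.2 with h | h <;> rw [h.1, h.2.1]

/-! ### Infinite interfaces -/

section infinite
variable {σ : Config}

lemma zpow_rel {r : IEdge σ → IEdge σ → Prop} (hr : Equivalence r)
    (h : ∀ e, r e (nextPerm σ e)) (e : IEdge σ) (k : ℤ) : r e ((nextPerm σ ^ k) e) := by
  induction k using Int.induction_on with
  | zero => exact hr.refl e
  | succ i ih =>
    rw [add_comm, zpow_one_add, Equiv.Perm.mul_apply]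
    exact hr.trans ih (h _)
  | pred i ih =>
    have h1 := h ((nextPerm σ ^ (-(i : ℤ) - 1)) e)
    rw [← Equiv.Perm.mul_apply, ← zpow_one_add, add_sub_cancel] at h1
    exact hr.trans ih (hr.symm h1)

/-- The sites of spin `0` along an interface lie in one `0`cluster, the sites of spin `1` in one
`1*`cluster. -/
lemma reach_next (e : IEdge σ) :
    (mono σ ∅).Reachable e.zero (nextPerm σ e).zero ∧
      (mono σ ∅).Reachable e.one (nextPerm σ e).one := by
  obtain ⟨-, a2, a3, a4, a5, -⟩ := e.adj_of_dirs
  have z := e.zero_spin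
  have o := e.one_spin
  have mk0 : ∀ {x y : Site}, σ x = false → σ y = false → adj x y →
      (mono σ ∅).Reachable x y := fun {x y} h1 h2 h3 =>
    SimpleGraph.Adj.reachable (G := mono σ ∅) ⟨by simp, by simp, Or.inl ⟨h1, h2, h3⟩⟩
  have mk1 : ∀ {x y : Site}, σ x = true → σ y = true → adjStar x y →
      (mono σ ∅).Reachable x y := fun {x y} h1 h2 h3 =>
    SimpleGraph.Adj.reachable (G := mono σ ∅) ⟨by simp, by simp, Or.inr ⟨h1, h2, h3⟩⟩
  rcases e.next_cases with ⟨s1, e1, e2⟩ | ⟨s1, s2, e1, e2⟩ | ⟨s1, s2, e1, e2⟩ <;> rw [e1, e2]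
  · exact ⟨.refl _, mk1 o s1 a5⟩
  · exact ⟨mk0 z s1 a2, mk1 o s2 a3.star⟩
  · exact ⟨(mk0 z s1 a2).trans (mk0 s1 s2 a4), .refl _⟩

lemma reach_sameCycle {e f : IEdge σ} (h : (nextPerm σ).SameCycle e f) :
    (mono σ ∅).Reachable e.zero f.zero ∧ (mono σ ∅).Reachable e.one f.one := by
  obtain ⟨k, rfl⟩ := h
  exact ⟨zpow_rel (r := fun e f => (mono σ ∅).Reachable e.zero f.zero)
      ⟨fun _ => .refl _, .symm, .trans⟩ (fun e => (reach_next e).1) e k,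
    zpow_rel (r := fun e f => (mono σ ∅).Reachable e.one f.one)
      ⟨fun _ => .refl _, .symm, .trans⟩ (fun e => (reach_next e).2) e k⟩

lemma mono_support_spin {Λ : Set Site} {u v z : Site} (p : (mono σ Λ).Walk u v)
    (hz : z ∈ p.support) : σ z = σ u :=
  (mono_spin (p.takeUntil z hz).reachable).symm

lemma mono_support_avoid {Λ : Set Site} {u v z : Site} (p : (mono σ Λ).Walk u v)
    (hu : u ∉ Λ) (hz : z ∈ p.support) : z ∉ Λ := by
  induction p with
  | nil => simp at hz; rwa [hz]
  | cons h p ih =>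
    rw [SimpleGraph.Walk.support_cons, List.mem_cons] at hz
    rcases hz with rfl | hz
    · exact hu
    · exact ih h.2.1 hz

lemma mono_chain0 {Λ : Set Site} {u v : Site} (p : (mono σ Λ).Walk u v)
    (hu : σ u = false) : p.support.IsChain adj := by
  have h := p.isChain_adj_support
  rw [List.isChain_iff_getElem] at h ⊢
  intro i hi
  rcases (h i hi).2.2 with h1 | h1
  · exact h1.2.2
  · have := mono_support_spin p (List.getElem_mem (l := p.support) (n := i) (by omega))
    rw [h1.1, hu] at this
    cases this

lemma mono_chain1 {Λ : Set Site} {u v : Site} (p : (mono σ Λ).Walk u v) :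
    p.support.IsChain adjStar :=
  p.isChain_adj_support.imp fun x y h => by
    rcases h.2.2 with h1 | h1
    · exact h1.2.2.star
    · exact h1.2.2

lemma head?_support {Λ : Set Site} {u v : Site} (p : (mono σ Λ).Walk u v) :
    p.support.head? = some u := by cases p <;> simp

lemma getLast?_support {Λ : Set Site} {u v : Site} (p : (mono σ Λ).Walk u v) :
    p.support.getLast? = some v := by
  rw [List.getLast?_eq_getLast_of_ne_nil p.support_ne_nil]; simp

lemma isCluster0_reachable {x : Site} (hx : σ x = false) :
    IsCluster0 σ {z | (mono σ ∅).Reachable x z} := by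
  refine ⟨⟨x, .refl x⟩, fun z hz => (mono_spin hz).symm.trans hx, ?_, ?_⟩
  · intro y hy z hz
    obtain ⟨p⟩ := (SimpleGraph.Reachable.symm hy).trans hz
    exact ⟨p.support, mono_chain0 p ((mono_spin hy).symm.trans hx),
      fun w hw => SimpleGraph.Reachable.trans hy (p.takeUntil w hw).reachable,
      head?_support p, getLast?_support p⟩
  · intro y hy z hyz hz
    exact SimpleGraph.Reachable.trans hy (SimpleGraph.Adj.reachable (G := mono σ ∅)
      ⟨by simp, by simp, Or.inl ⟨(mono_spin hy).symm.trans hx, hz, hyz⟩⟩)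

lemma isCluster1_reachable {x : Site} (hx : σ x = true) :
    IsCluster1 σ {z | (mono σ ∅).Reachable x z} := by
  refine ⟨⟨x, .refl x⟩, fun z hz => (mono_spin hz).symm.trans hx, ?_, ?_⟩
  · intro y hy z hz
    obtain ⟨p⟩ := (SimpleGraph.Reachable.symm hy).trans hz
    exact ⟨p.support, mono_chain1 p,
      fun w hw => SimpleGraph.Reachable.trans hy (p.takeUntil w hw).reachable,
      head?_support p, getLast?_support p⟩
  · intro y hy z hyz hz
    exact SimpleGraph.Reachable.trans hy (SimpleGraph.Adj.reachable (G := mono σ ∅)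
      ⟨by simp, by simp, Or.inr ⟨(mono_spin hy).symm.trans hx, hz, hyz⟩⟩)

/-- The potential does not change between diagonal neighbours of spin `1`: when their common
neighbour `z` has spin `0`, both edges from `z` lie on the same interface. -/
lemma crossing_potential_diag {h : IEdge σ → ℤ} (hinv : ∀ e, h (nextPerm σ e) = h e)
    {f : Site → ℤ} (hf : ∀ x y, adj x y → crossing h x y = f y - f x)
    {z u : Site} (hu : u ∈ dirs) (h1 : σ (z + u) = true) (h2 : σ (z + rot u) = true) :
    f (z + u) = f (z + rot u) := by
  have ha : ∀ v ∈ dirs, adj z (z + v) := by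
    intro v hv
    simp only [dirs, Finset.mem_insert, Finset.mem_singleton] at hv
    rcases hv with rfl | rfl | rfl | rfl <;> simp [adj]
  have e1 := hf _ _ (ha u hu)
  have e2 := hf _ _ (ha _ (rot_mem hu))
  have : crossing h z (z + u) = crossing h z (z + rot u) := by
    cases hz : σ z with
    | true => rw [crossing_same h (hz.trans h1.symm), crossing_same h (hz.trans h2.symm)]
    | false => exact (crossing_turn h hinv hu hz h1).1 h2
  omega

/-- A potential of an interface cochain is constant on `0`clusters and on `1*`clusters. -/
lemma crossing_potential_const {h : IEdge σ → ℤ} (hinv : ∀ e, h (nextPerm σ e) = h e)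
    {f : Site → ℤ} (hf : ∀ x y, adj x y → crossing h x y = f y - f x)
    {x y : Site} (hxy : (mono σ ∅).Reachable x y) : f x = f y := by
  obtain ⟨p⟩ := hxy
  induction p with
  | nil => rfl
  | @cons x y z hadj p ih =>
    rw [← ih]
    clear ih p
    have hsame : adj x y → σ x = σ y → f x = f y := fun h1 h2 => by
      have := hf _ _ h1
      rw [crossing_same h h2] at this
      omega
    rcases hadj.2.2 with ⟨h1, h2, h3⟩ | ⟨h1, h2, h3⟩
    · exact hsame h3 (h1.trans h2.symm)
    · obtain ⟨x1, x2⟩ := x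
      obtain ⟨y1, y2⟩ := y
      obtain ⟨hne, ha, hb⟩ := h3
      have d := @crossing_potential_diag σ h hinv f hf
      simp only [abs_le] at ha hb
      simp only [ne_eq, Prod.mk.injEq] at hne
      have c1 : y1 = x1 - 1 ∨ y1 = x1 ∨ y1 = x1 + 1 := by omega
      have c2 : y2 = x2 - 1 ∨ y2 = x2 ∨ y2 = x2 + 1 := by omega
      rcases c1 with rfl | rfl | rfl <;> rcases c2 with rfl | rfl | rfl
      · have := @d (x1, x2 - 1) (0, 1) (by decide)
        simp [rot] at this
        exact this h1 (by simpa [sub_eq_add_neg] using h2)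
      · exact hsame (by simp [adj]) (h1.trans h2.symm)
      · have := @d (x1 - 1, x2) (1, 0) (by decide)
        simp [rot] at this
        exact this h1 h2
      · exact hsame (by simp [adj]) (h1.trans h2.symm)
      · omega
      · exact hsame (by simp [adj]) (h1.trans h2.symm)
      · have := @d (x1 + 1, x2) (-1, 0) (by decide)
        simp [rot] at this
        exact this h1 (by simpa [sub_eq_add_neg] using h2)
      · exact hsame (by simp [adj]) (h1.trans h2.symm)
      · have := @d (x1, x2 + 1) (0, -1) (by decide)
        simp [rot] at this
        exact this h1 h2

/-- The interface of `e` is infinite. -/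
def InfInterface (e : IEdge σ) : Prop := {f | (nextPerm σ).SameCycle e f}.Infinite

lemma InfInterface.congr {e f : IEdge σ} (h : (nextPerm σ).SameCycle e f) :
    InfInterface e ↔ InfInterface f := by
  have : {f | (nextPerm σ).SameCycle e f} = {g | (nextPerm σ).SameCycle f g} := by
    ext g; exact ⟨fun h' => h.symm.trans h', fun h' => h.trans h'⟩
  unfold InfInterface
  rw [this]

/-- There is at most one infinite `0`cluster. -/
def AtMostOneInfinite0 (σ : Config) : Prop :=
  ∀ S T : Set Site, IsCluster0 σ S → S.Infinite → IsCluster0 σ T → T.Infinite → S = T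

/-- There is at most one infinite interface. The two infinite interfaces would border the same
infinite `0`cluster and the same infinite `1*`cluster. A potential that jumps by `1` across the
first interface only is constant on both clusters, so it would jump by `1` across the second too. -/
lemma infInterface_unique (h0 : AtMostOneInfinite0 σ) (h1 : AtMostOneInfinite1 σ)
    {e f : IEdge σ} (he : InfInterface e) (hf : InfInterface f) :
    (nextPerm σ).SameCycle e f := by
  classical
  have i0 : ∀ e : IEdge σ, InfInterface e → {z | (mono σ ∅).Reachable e.zero z}.Infinite :=
    fun e he hfin => he (IEdge.finite_of_zero hfin fun f hf => (reach_sameCycle hf).1)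
  have i1 : ∀ e : IEdge σ, InfInterface e → {z | (mono σ ∅).Reachable e.one z}.Infinite :=
    fun e he hfin => he (IEdge.finite_of_one hfin fun f hf => (reach_sameCycle hf).2)
  have r0 : (mono σ ∅).Reachable e.zero f.zero := by
    have := h0 _ _ (isCluster0_reachable e.zero_spin) (i0 e he)
      (isCluster0_reachable f.zero_spin) (i0 f hf)
    have h : f.zero ∈ {z | (mono σ ∅).Reachable f.zero z} := .refl _
    rw [← this] at h
    exact h
  have r1 : (mono σ ∅).Reachable e.one f.one := by
    have := h1 _ _ (isCluster1_reachable e.one_spin) (i1 e he)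
      (isCluster1_reachable f.one_spin) (i1 f hf)
    have h : f.one ∈ {z | (mono σ ∅).Reachable f.one z} := .refl _
    rw [← this] at h
    exact h
  by_contra hns
  let h : IEdge σ → ℤ := fun g => if (nextPerm σ).SameCycle e g then 1 else 0
  have hinv : ∀ g, h (nextPerm σ g) = h g := fun g => by
    simp only [h, Equiv.Perm.sameCycle_apply_right]
  obtain ⟨F, hF⟩ := exists_crossing_potential h hinv
  have c0 := crossing_potential_const hinv hF r0
  have c1 := crossing_potential_const hinv hF r1
  have k1 := hF _ _ e.adj_of_dirs.1
  have k2 := hF _ _ f.adj_of_dirs.1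
  rw [crossing_edge] at k1 k2
  have v1 : h e = 1 := if_pos (.refl _ _)
  have v2 : h f = 0 := if_neg hns
  omega

lemma InfInterface.injective {e : IEdge σ} (he : InfInterface e) :
    Function.Injective fun k : ℤ => (nextPerm σ ^ k) e := by
  have key : ∀ i j : ℤ, i < j → (nextPerm σ ^ i) e ≠ (nextPerm σ ^ j) e := by
    intro i j hij heq
    have hm : (nextPerm σ ^ (j - i)) e = e := by
      rw [sub_eq_neg_add, zpow_add, Equiv.Perm.mul_apply, ← heq, ← Equiv.Perm.mul_apply,
        ← zpow_add]
      simp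
    refine he (((Set.finite_Ico (0 : ℤ) (j - i)).image fun k => (nextPerm σ ^ k) e).subset ?_)
    rintro _ ⟨k, rfl⟩
    refine ⟨k % (j - i), ⟨Int.emod_nonneg _ (by omega), Int.emod_lt_of_pos _ (by omega)⟩, ?_⟩
    conv_rhs => rw [← Int.emod_add_mul_ediv k (j - i), zpow_add, zpow_mul, Equiv.Perm.mul_apply,
      Equiv.Perm.zpow_apply_eq_self_of_apply_eq_self hm]
  intro i j hij
  rcases lt_trichotomy i j with h | h | h
  · exact absurd hij (key i j h)
  · exact h
  · exact absurd hij.symm (key j i h)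

end infinite

/-! ### The defect of a potential along interfaces -/

section periods
variable {σ : Config} {n : ℕ}

/-- The unit square between `e` and the next interface edge avoids `square n`. -/
def Far (n : ℕ) (e : IEdge σ) : Prop :=
  e.zero ∉ square n ∧ e.one ∉ square n ∧ e.zeroAhead ∉ square n ∧ e.oneAhead ∉ square n

lemma square_finite (n : ℕ) : (square n).Finite := by
  refine ((Set.finite_Icc (-(n : ℤ)) n).prod (Set.finite_Icc (-(n : ℤ)) n)).subset ?_
  intro z hz
  exact ⟨abs_le.1 hz.1, abs_le.1 hz.2⟩

lemma finite_not_far (n : ℕ) : {e : IEdge σ | ¬ Far n e}.Finite := by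
  refine IEdge.finite_of_zero (square_finite (n + 1)) fun e he => ?_
  obtain ⟨a1, a2, -, -, -, a6⟩ := e.adj_of_dirs
  have hn : ∀ z, near e.zero z → z ∈ square n → e.zero ∈ square (n + 1) := by
    intro z h1 h2
    simp only [near, square, Set.mem_ofPred_eq, abs_le] at *
    push_cast
    omega
  simp only [Set.mem_ofPred_eq, Far, not_and_or, not_not] at he
  rcases he with h | h | h | h
  · exact hn _ (by simp [near]) h
  · exact hn _ a1.star.near h
  · exact hn _ a2.star.near h
  · exact hn _ a6.near h

/-- The amount by which `cut` differs across the edge `e` from the increment of `g`. -/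
def defect (g : Site → ℤ) (e : IEdge σ) : ℤ := cut e.zero e.one - (g e.one - g e.zero)

/-- `g` is a potential of `cut` on the monochromatic graph outside `square n`. -/
def IsPotential (σ : Config) (n : ℕ) (g : Site → ℤ) : Prop :=
  ∀ x y, (mono σ (square n)).Adj x y → cut x y = g y - g x

/-- Away from the square the defect is constant along interfaces, since `cut` is closed there
and consecutive interface edges are joined by monochromatic steps. -/
lemma defect_next {g : Site → ℤ} (hg : IsPotential σ n g) {e : IEdge σ} (he : Far n e) :
    defect g (nextPerm σ e) = defect g e := by
  obtain ⟨f1, f2, f3, f4⟩ := he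
  obtain ⟨a1, a2, a3, a4, a5, a6⟩ := e.adj_of_dirs
  have z := e.zero_spin
  have o := e.one_spin
  have h0 : (0 : Site) ∈ square n := by simp [square]
  have nz : ∀ {x : Site}, x ∉ square n → x ≠ 0 := fun hx h => hx (h ▸ h0)
  have t1 := cut_triangle (nz f1) (nz f2) (nz f3) a1.star.near a5.near a2.star.near
  have t2 := cut_triangle (nz f1) (nz f2) (nz f4) a1.star.near a3.star.near a6.near
  have t3 := cut_triangle (nz f1) (nz f3) (nz f4) a2.star.near a4.star.near a6.near
  have s := cut_swap e.one e.oneAhead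
  unfold defect
  rcases e.next_cases with ⟨s1, e1, e2⟩ | ⟨s1, s2, e1, e2⟩ | ⟨s1, s2, e1, e2⟩ <;> rw [e1, e2]
  · have := hg e.one e.zeroAhead ⟨f2, f3, Or.inr ⟨o, s1, a5⟩⟩
    omega
  · have := hg e.zero e.zeroAhead ⟨f1, f3, Or.inl ⟨z, s1, a2⟩⟩
    have := hg e.one e.oneAhead ⟨f2, f4, Or.inr ⟨o, s2, a3.star⟩⟩
    omega
  · have := hg e.zero e.zeroAhead ⟨f1, f3, Or.inl ⟨z, s1, a2⟩⟩
    have := hg e.zeroAhead e.oneAhead ⟨f3, f4, Or.inl ⟨s1, s2, a4⟩⟩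
    omega

/-- No mixed circuit outside `square n` winds around it. -/
def NoMixed (σ : Config) (n : ℕ) : Prop :=
  ∀ C, IsMixedCircuit σ C → (∀ z ∈ C, z ∉ square n) → pathSum cut (loop C) = 0

/-- Monochromatic cycles are mixed circuits, so if none of them winds then `cut` is exact on
the monochromatic graph. -/
lemma exists_isPotential (hno : NoMixed σ n) : ∃ g, IsPotential σ n g := by
  refine exists_potential cut fun u v p hp hvu => ?_
  have hav : ∀ z ∈ p.support, z ∉ square n := fun z hz => mono_support_avoid p hvu.2.1 hz
  have hstar : adjStar v u := by
    rcases hvu.2.2 with h | h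
    · exact h.2.2.star
    · exact h.2.2
  have hcirc : IsStarCircuit p.support := ⟨mono_chain1 p, p.support_ne_nil, by simpa using hstar⟩
  have hsum := pathSum_loop cut p.support p.support_ne_nil
  rw [SimpleGraph.Walk.head_support, SimpleGraph.Walk.getLast_support] at hsum
  rw [walkSum, ← hsum]
  refine hno _ ?_ hav
  cases hu : σ u with
  | false =>
    exact ⟨[], p.support, rfl, hp.support_nodup, .nil, mono_chain0 p hu, by simp,
      fun z hz => (mono_support_spin p hz).trans hu, hcirc⟩
  | true =>
    exact ⟨p.support, [], by simp, hp.support_nodup, mono_chain1 p, .nil,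
      fun z hz => (mono_support_spin p hz).trans hu, by simp, hcirc⟩

/-- If two interface edges are joined on both sides by monochromatic paths outside the square,
these paths and the two edges form a mixed circuit, whose vanishing winding number equates the
defects. -/
lemma defect_eq_of_reachable (hno : NoMixed σ n) {g : Site → ℤ} (hg : IsPotential σ n g)
    {e f : IEdge σ} (he : Far n e) (hf : Far n f)
    (r0 : (mono σ (square n)).Reachable e.zero f.zero)
    (r1 : (mono σ (square n)).Reachable f.one e.one) : defect g e = defect g f := by
  obtain ⟨p, hp⟩ := r0.exists_isPath
  obtain ⟨q, hq⟩ := r1.exists_isPath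
  have sp : ∀ z ∈ p.support, σ z = false := fun z hz =>
    (mono_support_spin p hz).trans e.zero_spin
  have sq : ∀ z ∈ q.support, σ z = true := fun z hz =>
    (mono_support_spin q hz).trans f.one_spin
  have hne : q.support ++ p.support ≠ [] := by simp
  have hchain : (q.support ++ p.support).IsChain adjStar := by
    rw [List.isChain_append]
    refine ⟨mono_chain1 q, mono_chain1 p, fun x hx y hy => ?_⟩
    rw [getLast?_support] at hx
    rw [head?_support] at hy
    cases hx
    cases hy
    exact e.adj_of_dirs.1.star.symm
  have hl : (q.support ++ p.support).getLast hne = f.zero := by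
    rw [List.getLast_append_of_ne_nil _ p.support_ne_nil, SimpleGraph.Walk.getLast_support]
  have hh : (q.support ++ p.support).head hne = f.one := by
    rw [List.head_append_of_ne_nil q.support_ne_nil, SimpleGraph.Walk.head_support]
  have h := hno (q.support ++ p.support)
    ⟨q.support, p.support, rfl, ?_, mono_chain1 q, mono_chain0 p e.zero_spin, sq, sp, hchain,
      hne, by rw [hl, hh]; exact f.adj_of_dirs.1.star⟩ ?_
  · rw [pathSum_loop _ _ hne, hl, hh,
      pathSum_append _ _ _ q.support_ne_nil p.support_ne_nil, SimpleGraph.Walk.getLast_support,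
      SimpleGraph.Walk.head_support] at h
    have w1 := walkSum_of_potential hg p
    have w2 := walkSum_of_potential hg q
    have := cut_swap e.zero e.one
    unfold walkSum at w1 w2
    unfold defect
    omega
  · rw [List.nodup_append]
    refine ⟨hq.support_nodup, hp.support_nodup, ?_⟩
    rintro x hx y hy rfl
    have := sq x hx
    rw [sp x hy] at this
    cases this
  · intro z hz
    rcases List.mem_append.1 hz with h | h
    · exact mono_support_avoid q hf.2.1 h
    · exact mono_support_avoid p he.1 h

/-- For any two interface edges away from the square some potential has equal defects at both. When
they are not joined by monochromatic paths on both sides, a constant can be added to the potential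
on the monochromatic component of one end of an edge, which changes the defect of that edge
alone. -/
lemma exists_balanced_potential (hno : NoMixed σ n) {e f : IEdge σ} (he : Far n e)
    (hf : Far n f) : ∃ g, IsPotential σ n g ∧ defect g e = defect g f := by
  classical
  obtain ⟨g, hg⟩ := exists_isPotential hno
  have shift : ∀ (r : Site) (t : ℤ), IsPotential σ n
      (fun z => g z + if (mono σ (square n)).Reachable r z then t else 0) := by
    intro r t x y h
    have : (mono σ (square n)).Reachable r x ↔ (mono σ (square n)).Reachable r y :=
      ⟨fun h' => h'.trans h.reachable, fun h' => h'.trans h.reachable.symm⟩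
    simp only [this]
    rw [hg x y h]
    ring
  have cross : ∀ e f : IEdge σ, ¬ (mono σ (square n)).Reachable e.zero f.one := fun e f h => by
    have := mono_spin h
    rw [e.zero_spin, f.one_spin] at this
    cases this
  by_cases r0 : (mono σ (square n)).Reachable e.zero f.zero
  · by_cases r1 : (mono σ (square n)).Reachable f.one e.one
    · exact ⟨g, hg, defect_eq_of_reachable hno hg he hf r0 r1⟩
    · refine ⟨_, shift f.one (defect g f - defect g e), ?_⟩
      have c1 : ¬ (mono σ (square n)).Reachable f.one e.zero := fun h => cross e f h.symm
      have c2 : ¬ (mono σ (square n)).Reachable f.one f.zero := fun h => cross f f h.symm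
      have c3 : (mono σ (square n)).Reachable f.one f.one := .refl _
      simp only [defect, c1, c2, c3, r1, if_true, if_false]
      ring
  · refine ⟨_, shift e.zero (defect g f - defect g e), ?_⟩
    have c3 : (mono σ (square n)).Reachable e.zero e.zero := .refl _
    simp only [defect, cross e e, cross e f, c3, r0, if_true, if_false]
    ring

/-- Some potential of `cut` has one and the same defect on all but finitely many edges of
infinite interfaces. Only one infinite interface exists; both its ends leave the square for good,
so the defect is eventually constant in either direction, and the two constants can be balanced. -/
lemma exists_uniform_potential (h0 : AtMostOneInfinite0 σ) (h1 : AtMostOneInfinite1 σ)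
    (hno : NoMixed σ n) : ∃ (g : Site → ℤ) (t : ℤ) (B : Set (IEdge σ)), IsPotential σ n g ∧
      B.Finite ∧ ∀ e, InfInterface e → e ∉ B → defect g e = t := by
  by_cases hinf : ∃ e : IEdge σ, InfInterface e
  swap
  · obtain ⟨g, hg⟩ := exists_isPotential hno
    exact ⟨g, 0, ∅, hg, Set.finite_empty, fun e he => absurd ⟨e, he⟩ hinf⟩
  obtain ⟨e, he⟩ := hinf
  have hfin : {k : ℤ | ¬ Far n ((nextPerm σ ^ k) e)}.Finite :=
    Set.Finite.preimage he.injective.injOn (finite_not_far n)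
  -- Before time `-T` and after time `T` the interface stays away from the square.
  obtain ⟨T, hT0, hT⟩ : ∃ T : ℤ, 0 ≤ T ∧ ∀ k, T ≤ |k| → Far n ((nextPerm σ ^ k) e) := by
    obtain ⟨M, hM⟩ := (hfin.image fun k => |k|).bddAbove
    refine ⟨max 0 (M + 1), le_max_left _ _, fun k hk => ?_⟩
    by_contra hnf
    have := hM ⟨k, hnf, rfl⟩
    have := le_trans (le_max_right _ _) hk
    dsimp only at *
    omega
  obtain ⟨g, hg, hbal⟩ := exists_balanced_potential hno (hT T (le_abs_self T))
    (hT (-T) (by rw [abs_neg]; exact le_abs_self T))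
  have hstep : ∀ k : ℤ, T ≤ |k| → defect g ((nextPerm σ ^ (k + 1)) e)
      = defect g ((nextPerm σ ^ k) e) := fun k hk => by
    rw [add_comm, zpow_one_add, Equiv.Perm.mul_apply, defect_next hg (hT k hk)]
  have up : ∀ i : ℕ, defect g ((nextPerm σ ^ (T + i)) e) = defect g ((nextPerm σ ^ T) e) := by
    intro i
    induction i with
    | zero => simp
    | succ i ih =>
      rw [← ih, ← hstep (T + i) (by rw [abs_of_nonneg (by omega)]; omega)]
      push_cast
      rw [add_assoc]
  have down : ∀ i : ℕ, defect g ((nextPerm σ ^ (-T - i)) e)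
      = defect g ((nextPerm σ ^ (-T)) e) := by
    intro i
    induction i with
    | zero => simp
    | succ i ih =>
      have h := hstep (-T - ((i + 1 : ℕ) : ℤ))
        (by push_cast; rw [abs_of_nonpos (by omega)]; omega)
      have hk : -T - ((i + 1 : ℕ) : ℤ) + 1 = -T - i := by push_cast; ring
      rw [hk] at h
      rw [← ih, h]
  refine ⟨g, defect g ((nextPerm σ ^ T) e), (fun k : ℤ => (nextPerm σ ^ k) e) '' Set.Icc (-T) T,
    hg, (Set.finite_Icc _ _).image _, fun f hf hfB => ?_⟩
  obtain ⟨k, rfl⟩ := infInterface_unique h0 h1 he hf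
  have hk : ¬(-T ≤ k ∧ k ≤ T) := fun hk => hfB ⟨k, hk, rfl⟩
  rcases le_total k (-T) with h | h
  · obtain ⟨i, hi⟩ := Int.eq_ofNat_of_zero_le (sub_nonneg.2 h)
    have := down i
    rwa [← hi, sub_sub_cancel, ← hbal] at this
  · obtain ⟨i, hi⟩ := Int.eq_ofNat_of_zero_le (a := k - T) (by omega)
    have := up i
    rwa [← hi, add_sub_cancel] at this

end periods

/-! ### Existence of a mixed circuit -/

/-- The deterministic shield lemma for the squares `square n`. -/
lemma exists_mixed_circuit {σ : Config} (h0 : AtMostOneInfinite0 σ) (h1 : AtMostOneInfinite1 σ)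
    (n : ℕ) : ∃ C, IsMixedCircuit σ C ∧ CircuitAround C (square n) := by
  classical
  by_contra hcon
  have hno : NoMixed σ n := fun C hC hav => by
    by_contra hsum
    obtain ⟨P, Q, -, -, -, -, -, -, hch, hne, hcl⟩ := id hC
    exact hcon ⟨C, hC, fun w hw => encloses_of_pathSum hch hne hcl hav hsum hw⟩
  obtain ⟨g, t, B, hg, hB, ht⟩ := exists_uniform_potential h0 h1 hno
  -- `Hit e`: the interface of `e` comes close to the square.
  let Hit : IEdge σ → Prop := fun e => ∃ b, ¬ Far n b ∧ (nextPerm σ).SameCycle b e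
  have hHit : ∀ e, Hit (nextPerm σ e) ↔ Hit e := fun e => by
    simp only [Hit, Equiv.Perm.sameCycle_apply_right]
  have hInf : ∀ e, InfInterface (nextPerm σ e) ↔ InfInterface e := fun e =>
    InfInterface.congr (Equiv.Perm.sameCycle_apply_left.2 (.refl _ _))
  -- On an interface that comes close to the square the defect need not be constant. There it is
  -- replaced by `t` if the interface is infinite and by `0` if it is finite; as only finitely many
  -- interfaces come close, this changes the defect at finitely many edges.
  let h : IEdge σ → ℤ := fun e =>
    if Hit e then (if InfInterface e then t else 0) else defect g e
  have hinv : ∀ e, h (nextPerm σ e) = h e := fun e => by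
    by_cases he : Hit e
    · simp only [h, if_pos he, if_pos ((hHit e).2 he), hInf]
    · simp only [h, if_neg he, if_neg (fun h' => he ((hHit e).1 h'))]
      refine defect_next hg ?_
      by_contra hf
      exact he ⟨e, hf, .refl _ _⟩
  have hfin : (B ∪ ⋃ b ∈ {b : IEdge σ | ¬ Far n b ∧ ¬ InfInterface b},
      {e | (nextPerm σ).SameCycle b e}).Finite :=
    hB.union (((finite_not_far n).subset fun b hb => hb.1).biUnion fun b hb =>
      Set.not_infinite.1 hb.2)
  -- A ring so large that `h` and the defect agree on all its edges.
  obtain ⟨M, hM⟩ := (hfin.image fun e => max |e.zero.1| |e.zero.2|).bddAbove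
  obtain ⟨R, hR1, hRn, hRM⟩ : ∃ R : ℕ, 1 ≤ R ∧ n < R ∧ M < R :=
    ⟨M.toNat + n + 1, by omega, by omega, by omega⟩
  have hdef : ∀ e : IEdge σ, e.zero ∈ squareRing R → h e = defect g e := fun e heR => by
    have hnot : e ∉ B ∪ ⋃ b ∈ {b : IEdge σ | ¬ Far n b ∧ ¬ InfInterface b},
        {e | (nextPerm σ).SameCycle b e} := fun hmem => by
      have hle := hM ⟨e, hmem, rfl⟩
      have heR' : max |e.zero.1| |e.zero.2| = (R : ℤ) := heR
      dsimp only at hle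
      omega
    by_cases he : Hit e
    · obtain ⟨b, hb, hbe⟩ := id he
      have hie : InfInterface e := by
        by_contra hi
        refine hnot (Or.inr (Set.mem_biUnion (x := b) ⟨hb, fun hib => hi ?_⟩ hbe))
        exact (InfInterface.congr hbe).1 hib
      simp only [h, if_pos he, if_pos hie]
      exact (ht e hie fun heB => hnot (Or.inl heB)).symm
    · simp only [h, if_neg he]
  obtain ⟨f, hf⟩ := exists_crossing_potential h hinv
  have hout : ∀ z ∈ squareRing R, z ∉ square n := fun z hz hzn => by
    have hz' : max |z.1| |z.2| = (R : ℤ) := hz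
    have := max_le hzn.1 hzn.2
    omega
  have hmix : ∀ x y, adj x y → x ∈ squareRing R → σ x = false → σ y = true →
      cut x y = (g y + f y) - (g x + f x) := fun x y hxy hx sx sy => by
    obtain ⟨e, rfl, rfl⟩ := IEdge.exists_of_adj hxy sx sy
    have h1 := hf _ _ hxy
    rw [crossing_edge, hdef e hx, defect] at h1
    omega
  -- Hence `g + f` would be a potential of `cut` on the ring.
  refine cut_not_exact_ring R hR1 (fun z => g z + f z) fun x y hxy hx hy => ?_
  have hsame : (mono σ (square n)).Adj x y → σ x = σ y →
      cut x y = (g y + f y) - (g x + f x) := fun hm hs => by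
    have h1 := hf _ _ hxy
    rw [crossing_same h hs] at h1
    have h2 := hg x y hm
    omega
  cases sx : σ x <;> cases sy : σ y
  · exact hsame ⟨hout x hx, hout y hy, Or.inl ⟨sx, sy, hxy⟩⟩ (sx.trans sy.symm)
  · exact hmix x y hxy hx sx sy
  · have h1 := hmix y x hxy.symm hy sy sx
    have h2 := cut_swap x y
    omega
  · exact hsame ⟨hout x hx, hout y hy, Or.inr ⟨sx, sy, hxy.star⟩⟩ (sx.trans sy.symm)

lemma exists_square (Δ : Finset Site) : ∃ n : ℕ, (Δ : Set Site) ⊆ square n := by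
  obtain ⟨n, hn⟩ := (Δ.image fun z => z.1.natAbs + z.2.natAbs).bddAbove
  refine ⟨n, fun z hz => ?_⟩
  have hz' : z.1.natAbs + z.2.natAbs ≤ n :=
    hn (Finset.mem_coe.2 (Finset.mem_image_of_mem (fun z => z.1.natAbs + z.2.natAbs) hz))
  constructor <;> rw [Int.abs_eq_natAbs] <;> omega

/-- Shield lemma: if a.s. there is a single infinite `0`cluster and at most one infinite
`1*`cluster, then for every finite `Δ` there is a.s. a mixed circuit around `Δ`. -/
theorem statement4 (μ : Measure Config) [IsProbabilityMeasure μ]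
    (h0 : ∀ᵐ σ ∂μ, UniqueInfinite0 σ)
    (h1 : ∀ᵐ σ ∂μ, AtMostOneInfinite1 σ)
    (Δ : Finset Site) :
    ∀ᵐ σ ∂μ, ∃ C : List Site, IsMixedCircuit σ C ∧ CircuitAround C ↑Δ := by
  obtain ⟨n, hn⟩ := exists_square Δ
  filter_upwards [h0, h1] with σ hσ0 hσ1
  obtain ⟨C, hC, hCn⟩ := exists_mixed_circuit
    (fun S T hS hSi hT hTi => hσ0.unique ⟨hS, hSi⟩ ⟨hT, hTi⟩) hσ1 n
  exact ⟨C, hC, fun z hz => hCn z (hn hz)⟩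

end Percolation
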